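/- arXiv:0706.1091 — 5 statements merged into one kernel-verified Lean document; each statement's English description precedes it below -/
import Mathlib

section
/- Let H be a real inner product space and let h : (0,1) → H be a measurable function with ‖h(y)‖ = 1 for almost every y. Define G : [0,1] → H by G(x) = ∫₀¹ f(x,y) h(y) dy. Then ∫₀¹ ‖G(x)‖ dx ≤ 2/π. -/
open MeasureTheory Real

theorem integral_prod_inner_self {α H : Type*} [MeasurableSpace α] [NormedAddCommGroup H]
    [InnerProductSpace ℝ H] [CompleteSpace H] {μ : Measure α} [SFinite μ] {u : α → H}
    (hu : Integrable u μ) :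
    ∫ p, inner ℝ (u p.1) (u p.2) ∂(μ.prod μ) = ‖∫ y, u y ∂μ‖ ^ 2 := by
  rw [← real_inner_self_eq_norm_sq]
  exact integral_prod_bilin (innerSL ℝ) hu hu

theorem sum_norm_sq_integral_smul_le {α ι H : Type*} [MeasurableSpace α] [DecidableEq ι]
    [NormedAddCommGroup H] [InnerProductSpace ℝ H] [CompleteSpace H] {μ : Measure α}
    [IsFiniteMeasure μ] (s : Finset ι) {φ : ι → α → ℝ} {C : ℝ}
    (hφ : ∀ i, AEStronglyMeasurable (φ i) μ) (hC : ∀ i a, ‖φ i a‖ ≤ C)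
    (horth : ∀ i j, ∫ a, φ i a * φ j a ∂μ = if i = j then 1 else 0)
    {h : α → H} (hh : Integrable h μ) (hh2 : Integrable (fun a => ‖h a‖ ^ 2) μ) :
    ∑ i ∈ s, ‖∫ a, φ i a • h a ∂μ‖ ^ 2 ≤ ∫ a, ‖h a‖ ^ 2 ∂μ := by
  set c : ι → H := fun i => ∫ a, φ i a • h a ∂μ with hc
  have hi : ∀ i, Integrable (fun a => φ i a • h a) μ := fun i =>
    hh.bdd_smul C (hφ i) (.of_forall (hC i))
  have hφi : ∀ i, Integrable (φ i) μ := fun i => .of_bound (hφ i) C (.of_forall (hC i))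
  have hij : ∀ i j, Integrable (fun a => φ i a * φ j a) μ := fun i j =>
    (hφi j).bdd_mul (hφ i) (.of_forall (hC i))
  have expand : ∀ a, ‖h a - ∑ i ∈ s, φ i a • c i‖ ^ 2 =
      ‖h a‖ ^ 2 - 2 * (∑ i ∈ s, inner ℝ (c i) (φ i a • h a)) +
        ∑ i ∈ s, ∑ j ∈ s, φ i a * φ j a * inner ℝ (c i) (c j) := by
    intro a
    rw [norm_sub_sq_real, ← real_inner_self_eq_norm_sq (∑ i ∈ s, φ i a • c i), inner_sum,
      sum_inner]
    simp only [inner_sum, real_inner_smul_left, real_inner_smul_right, real_inner_comm (h a),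
      mul_assoc]
    simp only [mul_left_comm]
  have hin : ∀ i, Integrable (fun a => inner ℝ (c i) (φ i a • h a)) μ := fun i =>
    (hi i).const_inner (c i)
  have key : ∫ a, ‖h a - ∑ i ∈ s, φ i a • c i‖ ^ 2 ∂μ =
      ∫ a, ‖h a‖ ^ 2 ∂μ - ∑ i ∈ s, ‖c i‖ ^ 2 := by
    have e1 : ∫ a, ∑ i ∈ s, inner ℝ (c i) (φ i a • h a) ∂μ = ∑ i ∈ s, ‖c i‖ ^ 2 := by
      rw [integral_finsetSum _ fun i _ => hin i]
      refine Finset.sum_congr rfl fun i _ => ?_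
      rw [integral_inner (hi i), ← real_inner_self_eq_norm_sq]
    have e2 : ∫ a, ∑ i ∈ s, ∑ j ∈ s, φ i a * φ j a * inner ℝ (c i) (c j) ∂μ =
        ∑ i ∈ s, ‖c i‖ ^ 2 := by
      rw [integral_finsetSum _ fun i _ => integrable_finsetSum _ fun j _ => (hij i j).mul_const _]
      refine Finset.sum_congr rfl fun i his => ?_
      rw [integral_finsetSum _ fun j _ => (hij i j).mul_const _]
      simp [integral_mul_const, horth, his]
    simp only [expand]
    rw [integral_add, integral_sub hh2, integral_const_mul, e1, e2]
    · ring
    · exact (integrable_finsetSum _ fun i _ => hin i).const_mul 2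
    · exact hh2.sub ((integrable_finsetSum _ fun i _ => hin i).const_mul 2)
    · exact integrable_finsetSum _ fun i _ => integrable_finsetSum _ fun j _ =>
        (hij i j).mul_const _
  have := integral_nonneg (μ := μ) (f := fun a => ‖h a - ∑ i ∈ s, φ i a • c i‖ ^ 2)
    fun a => by positivity
  linarith

theorem hasSum_cos_div_sq {x : ℝ} (hx : x ∈ Set.Icc (0 : ℝ) 1) :
    HasSum (fun n : ℕ => 1 / (n : ℝ) ^ 2 * cos (2 * π * n * x)) (π ^ 2 * (x ^ 2 - x + 6⁻¹)) := by
  have hs := hasSum_one_div_nat_pow_mul_cos one_ne_zero hx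
  rw [show (Polynomial.map (algebraMap ℚ ℝ) (Polynomial.bernoulli (2 * 1))).eval x =
    x ^ 2 - x + 6⁻¹ from bernoulliFun_two x] at hs
  have hv : (-1 : ℝ) ^ (1 + 1) * (2 * π) ^ (2 * 1) / 2 / ((2 * 1).factorial : ℝ) = π ^ 2 := by
    norm_num [Nat.factorial]
    ring
  rwa [hv, mul_one] at hs

theorem hasSum_cos_odd_div_sq {t : ℝ} (ht : t ∈ Set.Icc (0 : ℝ) 1) :
    HasSum (fun k : ℕ => 8 / π ^ 2 / (2 * k + 1) ^ 2 * cos ((2 * k + 1) * π * t))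
      (1 - 2 * t) := by
  have hall := hasSum_cos_div_sq (x := t / 2) ⟨by linarith [ht.1], by linarith [ht.2]⟩
  set g : ℕ → ℝ := fun n => 1 / (n : ℝ) ^ 2 * cos (2 * π * n * (t / 2)) with hg
  have heven : HasSum (fun k => g (2 * k)) (1 / 4 * (π ^ 2 * (t ^ 2 - t + 6⁻¹))) := by
    have hgk : ∀ k : ℕ, g (2 * k) = 1 / 4 * (1 / (k : ℝ) ^ 2 * cos (2 * π * k * t)) := fun k => by
      simp only [hg]
      push_cast
      rw [show 2 * π * (2 * (k : ℝ)) * (t / 2) = 2 * π * k * t by ring]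
      ring
    simpa only [hgk] using (hasSum_cos_div_sq ht).mul_left (1 / 4)
  obtain ⟨S, hodd⟩ : Summable fun k => g (2 * k + 1) :=
    hall.summable.comp_injective (i := fun k : ℕ => 2 * k + 1) fun a b hab => by
      simpa using hab
  have hsum := (heven.even_add_odd hodd).unique hall
  have hgk : ∀ k : ℕ, 8 / π ^ 2 / (2 * k + 1) ^ 2 * cos ((2 * k + 1) * π * t) =
      8 / π ^ 2 * g (2 * k + 1) := fun k => by
    simp only [hg]
    push_cast
    rw [show 2 * π * (2 * (k : ℝ) + 1) * (t / 2) = (2 * k + 1) * π * t by ring]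
    ring
  have hS : 1 - 2 * t = 8 / π ^ 2 * S := by
    rw [eq_sub_of_add_eq' hsum]
    field_simp
    ring
  simpa only [hgk, hS] using hodd.mul_left (8 / π ^ 2)

theorem integral_sign_mul_sign {y z : ℝ} (hy : y ∈ Set.Ioo (0 : ℝ) 1)
    (hz : z ∈ Set.Ioo (0 : ℝ) 1) :
    ∫ x in Set.Ioo (0 : ℝ) 1, (if x < y then (1 : ℝ) else -1) * (if x < z then (1 : ℝ) else -1) =
      1 - 2 * |y - z| := by
  wlog hyz : y ≤ z generalizing y z
  · rw [abs_sub_comm, ← this hz hy (le_of_not_ge hyz)]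
    simp only [mul_comm]
  have hfun : ∀ x : ℝ, (if x < y then (1 : ℝ) else -1) * (if x < z then (1 : ℝ) else -1) =
      1 - 2 * (Set.Ico y z).indicator 1 x := by
    intro x
    simp only [Set.indicator, Set.mem_Ico, Pi.one_apply]
    grind
  have hint : Integrable ((Set.Ico y z).indicator (1 : ℝ → ℝ))
      (volume.restrict (Set.Ioo (0 : ℝ) 1)) :=
    (integrable_const (1 : ℝ)).indicator measurableSet_Ico
  have hsub : Set.Ico y z ∩ Set.Ioo 0 1 = Set.Ico y z :=
    Set.inter_eq_left.2 fun x hx => ⟨hy.1.trans_le hx.1, hx.2.trans hz.2⟩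
  simp only [hfun]
  rw [integral_sub (integrable_const _) (hint.const_mul 2), integral_const_mul,
    integral_indicator_one measurableSet_Ico, measureReal_restrict_apply measurableSet_Ico, hsub,
    Real.volume_real_Ico_of_le hyz, abs_of_nonpos (by linarith)]
  simp

theorem integral_cos_two_pi_int_mul (m : ℤ) :
    ∫ x in Set.Ioo (0 : ℝ) 1, cos (2 * π * m * x) = if m = 0 then 1 else 0 := by
  rw [← integral_Ioc_eq_integral_Ioo, ← intervalIntegral.integral_of_le zero_le_one]
  split_ifs with hm
  · simp [hm]
  · rw [intervalIntegral.integral_comp_mul_left _ (by simp [hm, pi_ne_zero]), integral_cos,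
      mul_one, mul_comm (2 * π), ← zero_add ((m : ℝ) * (2 * π)), sin_add_int_mul_two_pi]
    simp

theorem integral_sin_two_pi_int_mul (m : ℤ) :
    ∫ x in Set.Ioo (0 : ℝ) 1, sin (2 * π * m * x) = 0 := by
  rw [← integral_Ioc_eq_integral_Ioo, ← intervalIntegral.integral_of_le zero_le_one]
  by_cases hm : m = 0
  · simp [hm]
  · rw [intervalIntegral.integral_comp_mul_left _ (by simp [hm, pi_ne_zero]), integral_sin,
      mul_one, mul_comm (2 * π), ← zero_add ((m : ℝ) * (2 * π)), cos_add_int_mul_two_pi]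
    simp

/-- The functions `√2 cos ((2k+1)πy)` and `√2 sin ((2k+1)πy)`, which form an orthonormal system
on `(0,1)`. -/
noncomputable def oddTrig : ℕ ⊕ ℕ → ℝ → ℝ :=
  Sum.elim (fun k y => √2 * cos ((2 * k + 1) * π * y)) (fun k y => √2 * sin ((2 * k + 1) * π * y))

theorem continuous_oddTrig (i : ℕ ⊕ ℕ) : Continuous (oddTrig i) := by
  rcases i with k | k <;> simp only [oddTrig, Sum.elim_inl, Sum.elim_inr] <;> fun_prop

theorem norm_oddTrig_le (i : ℕ ⊕ ℕ) (y : ℝ) : ‖oddTrig i y‖ ≤ √2 := by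
  rcases i with k | k <;> simp only [oddTrig, Sum.elim_inl, Sum.elim_inr, norm_mul, norm_eq_abs,
    abs_of_nonneg (sqrt_nonneg 2)]
  · exact mul_le_of_le_one_right (sqrt_nonneg 2) (abs_cos_le_one _)
  · exact mul_le_of_le_one_right (sqrt_nonneg 2) (abs_sin_le_one _)

theorem integral_oddTrig_mul_oddTrig (i j : ℕ ⊕ ℕ) :
    ∫ y in Set.Ioo (0 : ℝ) 1, oddTrig i y * oddTrig j y = if i = j then 1 else 0 := by
  have hint : ∀ {g : ℝ → ℝ}, Continuous g → IntegrableOn g (Set.Ioo (0 : ℝ) 1) := fun hg =>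
    (hg.integrableOn_Icc).mono_set Set.Ioo_subset_Icc_self
  have hsub : ∀ (k l : ℕ) (y : ℝ), 2 * π * ((k - l : ℤ) : ℝ) * y =
      (2 * k + 1) * π * y - (2 * l + 1) * π * y := fun k l y => by push_cast; ring
  have hadd : ∀ (k l : ℕ) (y : ℝ), 2 * π * ((k + l + 1 : ℤ) : ℝ) * y =
      (2 * k + 1) * π * y + (2 * l + 1) * π * y := fun k l y => by push_cast; ring
  have hs : √2 * √2 = (2 : ℝ) := mul_self_sqrt zero_le_two
  have hne : ∀ k l : ℕ, (k + l + 1 : ℤ) ≠ 0 := fun k l => by positivity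
  have hmixed : ∀ k l : ℕ, ∫ y in Set.Ioo (0 : ℝ) 1,
      oddTrig (.inr k) y * oddTrig (.inl l) y = 0 := fun k l => by
    have heq : ∀ y, oddTrig (.inr k) y * oddTrig (.inl l) y =
        sin (2 * π * ((k - l : ℤ) : ℝ) * y) + sin (2 * π * ((k + l + 1 : ℤ) : ℝ) * y) := fun y => by
      simp only [oddTrig, Sum.elim_inl, Sum.elim_inr, hsub, hadd, sin_sub, sin_add]
      linear_combination (sin ((2 * k + 1) * π * y) * cos ((2 * l + 1) * π * y)) * hs
    simp only [heq]
    rw [integral_add (hint (by fun_prop)) (hint (by fun_prop)), integral_sin_two_pi_int_mul,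
      integral_sin_two_pi_int_mul, add_zero]
  rcases i with k | k <;> rcases j with l | l
  · have heq : ∀ y, oddTrig (.inl k) y * oddTrig (.inl l) y =
        cos (2 * π * ((k - l : ℤ) : ℝ) * y) + cos (2 * π * ((k + l + 1 : ℤ) : ℝ) * y) := fun y => by
      simp only [oddTrig, Sum.elim_inl, hsub, hadd, cos_sub, cos_add]
      linear_combination (cos ((2 * k + 1) * π * y) * cos ((2 * l + 1) * π * y)) * hs
    simp only [heq]
    rw [integral_add (hint (by fun_prop)) (hint (by fun_prop)), integral_cos_two_pi_int_mul,
      integral_cos_two_pi_int_mul, if_neg (hne k l)]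
    simp [sub_eq_zero]
  · simpa [mul_comm] using hmixed l k
  · simpa using hmixed k l
  · have heq : ∀ y, oddTrig (.inr k) y * oddTrig (.inr l) y =
        cos (2 * π * ((k - l : ℤ) : ℝ) * y) - cos (2 * π * ((k + l + 1 : ℤ) : ℝ) * y) := fun y => by
      simp only [oddTrig, Sum.elim_inr, hsub, hadd, cos_sub, cos_add]
      linear_combination (sin ((2 * k + 1) * π * y) * sin ((2 * l + 1) * π * y)) * hs
    simp only [heq]
    rw [integral_sub (hint (by fun_prop)) (hint (by fun_prop)), integral_cos_two_pi_int_mul,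
      integral_cos_two_pi_int_mul, if_neg (hne k l)]
    simp [sub_eq_zero]

theorem integral_norm_sq_integral_sign_smul_le {H : Type*} [NormedAddCommGroup H]
    [InnerProductSpace ℝ H] [CompleteSpace H] {h : ℝ → H}
    (hh : Integrable h (volume.restrict (Set.Ioo (0 : ℝ) 1)))
    (hh2 : Integrable (fun y => ‖h y‖ ^ 2) (volume.restrict (Set.Ioo (0 : ℝ) 1))) :
    Integrable (fun x => ‖∫ y in Set.Ioo (0 : ℝ) 1, (if x < y then (1 : ℝ) else -1) • h y‖ ^ 2)
      (volume.restrict (Set.Ioo (0 : ℝ) 1)) ∧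
    ∫ x in Set.Ioo (0 : ℝ) 1,
        ‖∫ y in Set.Ioo (0 : ℝ) 1, (if x < y then (1 : ℝ) else -1) • h y‖ ^ 2 ≤
      4 / π ^ 2 * ∫ y in Set.Ioo (0 : ℝ) 1, ‖h y‖ ^ 2 := by
  set μ : Measure ℝ := volume.restrict (Set.Ioo (0 : ℝ) 1) with hμ
  set σ : ℝ → ℝ → ℝ := fun x y => if x < y then 1 else -1 with hσ
  have hσm : Measurable (Function.uncurry σ) :=
    Measurable.ite (measurableSet_lt measurable_fst measurable_snd) measurable_const
      measurable_const
  have hσn : ∀ x y, ‖σ x y‖ ≤ 1 := fun x y => by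
    simp only [hσ]
    split_ifs <;> simp
  have hsmul : ∀ {φ : ℝ → ℝ}, Measurable φ → (∀ y, ‖φ y‖ ≤ 1) →
      Integrable (fun y => φ y • h y) μ := fun hφ hb =>
    hh.bdd_smul 1 hφ.aestronglyMeasurable (.of_forall hb)
  have hsq : ∀ {φ : ℝ → ℝ}, Measurable φ → (∀ y, ‖φ y‖ ≤ 1) →
      ∫ p : ℝ × ℝ, φ p.1 * φ p.2 * inner ℝ (h p.1) (h p.2) ∂(μ.prod μ) =
        ‖∫ y, φ y • h y ∂μ‖ ^ 2 := fun hφ hb => by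
    rw [← integral_prod_inner_self (hsmul hφ hb)]
    refine integral_congr_ae (.of_forall fun p => ?_)
    simp only [real_inner_smul_left, real_inner_smul_right]
    ring
  have hinner : Integrable (fun p : ℝ × ℝ => inner ℝ (h p.1) (h p.2)) (μ.prod μ) :=
    hh.op_fst_snd continuous_inner ⟨1, fun x y => by simpa using abs_real_inner_le_norm x y⟩ hh
  have hF : Integrable (fun q : ℝ × (ℝ × ℝ) =>
      σ q.1 q.2.1 * σ q.1 q.2.2 * inner ℝ (h q.2.1) (h q.2.2)) (μ.prod (μ.prod μ)) := by
    refine (hinner.comp_snd μ).bdd_mul (c := 1) (Measurable.aestronglyMeasurable ?_)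
      (.of_forall fun q => ?_)
    · exact (hσm.comp (measurable_fst.prodMk measurable_snd.fst)).mul
        (hσm.comp (measurable_fst.prodMk measurable_snd.snd))
    · rw [norm_mul]
      exact mul_le_one₀ (hσn _ _) (norm_nonneg _) (hσn _ _)
  have hGx : ∀ x, ∫ p : ℝ × ℝ, σ x p.1 * σ x p.2 * inner ℝ (h p.1) (h p.2) ∂(μ.prod μ) =
      ‖∫ y, σ x y • h y ∂μ‖ ^ 2 := fun x => hsq (hσm.comp measurable_prodMk_left) (hσn x)
  refine ⟨by simpa only [hGx] using hF.integral_prod_left, ?_⟩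
  have hmem : ∀ᵐ p : ℝ × ℝ ∂(μ.prod μ), p.1 ∈ Set.Ioo (0 : ℝ) 1 ∧ p.2 ∈ Set.Ioo (0 : ℝ) 1 := by
    rw [hμ, Measure.prod_restrict]
    exact ae_restrict_mem (measurableSet_Ioo.prod measurableSet_Ioo)
  have hkernel : ∫ x, ‖∫ y, σ x y • h y ∂μ‖ ^ 2 ∂μ =
      ∫ p : ℝ × ℝ, (1 - 2 * |p.1 - p.2|) * inner ℝ (h p.1) (h p.2) ∂(μ.prod μ) := by
    simp only [← hGx]
    rw [integral_integral_swap hF]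
    refine integral_congr_ae ?_
    filter_upwards [hmem] with p hp
    rw [integral_mul_const, integral_sign_mul_sign hp.1 hp.2]
  have hcos : ∀ a : ℝ, Integrable (fun p : ℝ × ℝ =>
      cos (a * (p.1 - p.2)) * inner ℝ (h p.1) (h p.2)) (μ.prod μ) := fun a =>
    hinner.bdd_mul (c := 1) (Continuous.aestronglyMeasurable (by fun_prop))
      (.of_forall fun p => abs_cos_le_one _)
  have hterm : ∀ a : ℝ, ∫ p : ℝ × ℝ, cos (a * (p.1 - p.2)) * inner ℝ (h p.1) (h p.2) ∂(μ.prod μ) =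
      ‖∫ y, cos (a * y) • h y ∂μ‖ ^ 2 + ‖∫ y, sin (a * y) • h y ∂μ‖ ^ 2 := fun a => by
    rw [← hsq (φ := fun y => cos (a * y)) (by fun_prop) fun y => abs_cos_le_one _,
      ← hsq (φ := fun y => sin (a * y)) (by fun_prop) fun y => abs_sin_le_one _, ← integral_add]
    · simp only [mul_sub, cos_sub, add_mul]
    · exact hinner.bdd_mul (c := 1) (Continuous.aestronglyMeasurable (by fun_prop))
        (.of_forall fun p => by
          rw [norm_mul]
          exact mul_le_one₀ (abs_cos_le_one _) (norm_nonneg _) (abs_cos_le_one _))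
    · exact hinner.bdd_mul (c := 1) (Continuous.aestronglyMeasurable (by fun_prop))
        (.of_forall fun p => by
          rw [norm_mul]
          exact mul_le_one₀ (abs_sin_le_one _) (norm_nonneg _) (abs_sin_le_one _))
  have hw : Summable fun k : ℕ => 8 / π ^ 2 / (2 * (k : ℝ) + 1) ^ 2 := by
    simpa using (hasSum_cos_odd_div_sq (t := 0) (by simp)).summable
  have hseries : HasSum (fun k : ℕ => ∫ p : ℝ × ℝ, 8 / π ^ 2 / (2 * (k : ℝ) + 1) ^ 2 *
      (cos ((2 * k + 1) * π * (p.1 - p.2)) * inner ℝ (h p.1) (h p.2)) ∂(μ.prod μ))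
      (∫ x, ‖∫ y, σ x y • h y ∂μ‖ ^ 2 ∂μ) := by
    rw [hkernel]
    refine hasSum_integral_of_dominated_convergence
      (fun k p => 8 / π ^ 2 / (2 * (k : ℝ) + 1) ^ 2 * ‖(inner ℝ (h p.1) (h p.2) : ℝ)‖)
      (fun k => ((hcos _).const_mul _).aestronglyMeasurable) (fun k => .of_forall fun p => ?_)
      (.of_forall fun p => hw.mul_right _) ?_ ?_
    · rw [norm_mul, norm_mul, norm_of_nonneg (by positivity)]
      gcongr
      exact mul_le_of_le_one_left (norm_nonneg _) (abs_cos_le_one _)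
    · simp only [tsum_mul_right]
      exact hinner.norm.const_mul _
    · filter_upwards [hmem] with p hp
      have hs := hasSum_cos_odd_div_sq (t := |p.1 - p.2|)
        ⟨abs_nonneg _, abs_le.2 ⟨by linarith [hp.1.1, hp.2.2], by linarith [hp.1.2, hp.2.1]⟩⟩
      have hev : ∀ k : ℕ, cos ((2 * k + 1) * π * |p.1 - p.2|) =
          cos ((2 * k + 1) * π * (p.1 - p.2)) := fun k => by
        rw [← cos_abs ((2 * k + 1) * π * (p.1 - p.2)), abs_mul ((2 * k + 1) * π),
          abs_of_nonneg (a := (2 * (k : ℝ) + 1) * π) (by positivity)]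
      simp only [hev] at hs
      simpa only [mul_assoc] using hs.mul_right (inner ℝ (h p.1) (h p.2))
  simp only [integral_const_mul, hterm] at hseries
  have hbessel : ∀ s : Finset ℕ, ∑ k ∈ s, (‖∫ y, cos ((2 * k + 1) * π * y) • h y ∂μ‖ ^ 2 +
      ‖∫ y, sin ((2 * k + 1) * π * y) • h y ∂μ‖ ^ 2) ≤ (∫ y, ‖h y‖ ^ 2 ∂μ) / 2 := fun s => by
    have hb := sum_norm_sq_integral_smul_le (μ := μ) (s.disjSum s)
      (fun i => (continuous_oddTrig i).aestronglyMeasurable) norm_oddTrig_le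
      integral_oddTrig_mul_oddTrig hh hh2
    rw [Finset.sum_disjSum, ← Finset.sum_add_distrib] at hb
    simp only [oddTrig, Sum.elim_inl, Sum.elim_inr, mul_smul √2, integral_smul, norm_smul, mul_pow,
      norm_of_nonneg (sqrt_nonneg 2), sq_sqrt zero_le_two, ← mul_add, ← Finset.mul_sum] at hb
    linarith
  refine hasSum_le_of_sum_le hseries fun s => ?_
  calc _ ≤ ∑ k ∈ s, 8 / π ^ 2 * (‖∫ y, cos ((2 * k + 1) * π * y) • h y ∂μ‖ ^ 2 +
          ‖∫ y, sin ((2 * k + 1) * π * y) • h y ∂μ‖ ^ 2) := by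
        refine Finset.sum_le_sum fun k _ => mul_le_mul_of_nonneg_right ?_ (by positivity)
        exact div_le_self (by positivity) (one_le_pow₀ (by linarith [k.cast_nonneg (α := ℝ)]))
    _ ≤ 8 / π ^ 2 * ((∫ y, ‖h y‖ ^ 2 ∂μ) / 2) := by
        rw [← Finset.mul_sum]
        gcongr
        exact hbessel s
    _ = _ := by ring

/-- Let `f : (0,1)×(0,1) → ℝ` be `1` if `x < y` and `-1` otherwise. For measurable
`h : (0,1) → H` of unit norm a.e. and `G(x) = ∫₀¹ f(x,y) h(y) dy`, one has
`∫₀¹ ‖G(x)‖ dx ≤ 2/π`. -/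
theorem bell_example1_G_norm_bound (H : Type*) [NormedAddCommGroup H]
    [InnerProductSpace ℝ H] [MeasurableSpace H] [BorelSpace H] [CompleteSpace H]
    (h : ℝ → H) (hm : Measurable h)
    (h1 : ∀ᵐ y ∂(volume.restrict (Set.Ioo (0:ℝ) 1)), ‖h y‖ = 1)
    (G : ℝ → H)
    (hG : ∀ x : ℝ, G x = ∫ y in Set.Ioo (0:ℝ) 1, (if x < y then (1:ℝ) else -1) • h y) :
    (∫ x in Set.Ioo (0:ℝ) 1, ‖G x‖) ≤ 2 / π := by
  set μ : Measure ℝ := volume.restrict (Set.Ioo (0 : ℝ) 1) with hμ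
  by_cases hh : AEStronglyMeasurable h μ
  · have hint : Integrable h μ := .of_bound hh 1 (h1.mono fun y hy => hy.le)
    have hsq : (fun y => ‖h y‖ ^ 2) =ᵐ[μ] fun _ => 1 := h1.mono fun y hy => by simp [hy]
    obtain ⟨hGi, hGle⟩ := integral_norm_sq_integral_sign_smul_le hint
      ((integrable_const (1 : ℝ)).congr hsq.symm)
    simp only [← hμ, ← hG] at hGi hGle
    have hone : ∫ _, (1 : ℝ) ∂μ = 1 := by simp [hμ]
    rw [integral_congr_ae hsq, hone, mul_one] at hGle
    have hamgm : ∀ x, ‖G x‖ ≤ π / 4 * ‖G x‖ ^ 2 + π⁻¹ := fun x => by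
      have hid : π / 4 * ‖G x‖ ^ 2 + π⁻¹ - ‖G x‖ = π / 4 * (‖G x‖ - 2 / π) ^ 2 := by
        field_simp
        ring
      have : 0 ≤ π / 4 * (‖G x‖ - 2 / π) ^ 2 := by positivity
      linarith
    calc ∫ x, ‖G x‖ ∂μ ≤ ∫ x, (π / 4 * ‖G x‖ ^ 2 + π⁻¹) ∂μ :=
          integral_mono_of_nonneg (.of_forall fun x => norm_nonneg _)
            ((hGi.const_mul _).add (integrable_const _)) (.of_forall hamgm)
      _ = π / 4 * ∫ x, ‖G x‖ ^ 2 ∂μ + π⁻¹ := by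
          rw [integral_add (hGi.const_mul _) (integrable_const _), integral_const_mul]
          simp [hμ]
      _ ≤ π / 4 * (4 / π ^ 2) + π⁻¹ := by gcongr
      _ = 2 / π := by
          field_simp
          norm_num
  · have hG0 : ∀ x, G x = 0 := fun x => by
      rw [hG x]
      refine integral_non_aestronglyMeasurable fun hx => hh ?_
      have hσ : Measurable fun y : ℝ => if x < y then (1 : ℝ) else -1 :=
        Measurable.ite measurableSet_Ioi measurable_const measurable_const
      refine (hσ.aestronglyMeasurable.smul hx).congr (.of_forall fun y => ?_)
      by_cases hxy : x < y <;> simp [hxy]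
    simp only [hG0, norm_zero, integral_zero]
    positivity
end

section
/- Suppose the pair (g,h) maximizes I_f(g,h) over all measurable functions g : X → ℝ^d, h : Y → ℝ^d with ‖g(x)‖ = 1 and ‖h(y)‖ = 1 for almost every x, y. Define G : X → ℝ^d by G(x) = ∫_Y f(x,y) h(y) dy. Then for almost every x ∈ X with G(x) ≠ 0, one has g(x) = G(x)/‖G(x)‖. -/
open MeasureTheory
open scoped RealInnerProductSpace

/-- A unit vector `u` with `⟪u, v⟫ = ‖v‖` is the normalization of `v ≠ 0`. -/
theorem eq_inv_norm_smul_of_inner_eq_norm {E : Type*} [NormedAddCommGroup E]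
    [InnerProductSpace ℝ E] {u v : E} (hu : ‖u‖ = 1) (hv : v ≠ 0) (huv : ⟪u, v⟫ = ‖v‖) :
    u = ‖v‖⁻¹ • v := by
  have key : ‖v‖ • u = ‖u‖ • v := inner_eq_norm_mul_iff_real.mp (by rw [huv, hu, one_mul])
  rw [hu, one_smul] at key
  exact (eq_inv_smul_iff₀ (norm_ne_zero_iff.mpr hv)).mpr key

/-- If an integrable vector field `G` pairs with the a.e. unit field `g` at least as well as with
every other measurable a.e. unit field, then `g` is a.e. the normalization of `G` where `G ≠ 0`. -/
theorem ae_eq_normalize_of_forall_integral_inner_le {X E : Type*} [MeasurableSpace X]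
    {μ : Measure X} [NormedAddCommGroup E] [InnerProductSpace ℝ E] [MeasurableSpace E]
    [BorelSpace E] [SecondCountableTopology E] {g G : X → E} (hg : Measurable g)
    (hg1 : ∀ᵐ x ∂μ, ‖g x‖ = 1) (hG : Measurable G) (hGint : Integrable G μ)
    (hmax : ∀ g' : X → E, Measurable g' → (∀ᵐ x ∂μ, ‖g' x‖ = 1) →
      ∫ x, ⟪g' x, G x⟫ ∂μ ≤ ∫ x, ⟪g x, G x⟫ ∂μ) :
    ∀ᵐ x ∂μ, G x ≠ 0 → g x = ‖G x‖⁻¹ • G x := by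
  classical
  let g' : X → E := fun x => if G x = 0 then g x else ‖G x‖⁻¹ • G x
  have hg' : Measurable g' :=
    Measurable.ite (hG (measurableSet_singleton 0)) hg (hG.norm.inv.smul hG)
  have hg'1 : ∀ᵐ x ∂μ, ‖g' x‖ = 1 := by
    filter_upwards [hg1] with x hx
    by_cases h0 : G x = 0
    · simpa [g', h0] using hx
    · simp [g', h0, norm_smul]
  have hinner : ∀ x, ⟪g' x, G x⟫ = ‖G x‖ := by
    intro x
    by_cases h0 : G x = 0
    · simp [h0]
    · have hn : ‖G x‖ ≠ 0 := norm_ne_zero_iff.mpr h0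
      simp only [g', h0, if_false, real_inner_smul_left, real_inner_self_eq_norm_sq]
      field_simp
  have hle : (fun x => ⟪g x, G x⟫) ≤ᵐ[μ] fun x => ‖G x‖ := by
    filter_upwards [hg1] with x hx
    simpa [hx] using real_inner_le_norm (g x) (G x)
  have hint : Integrable (fun x => ⟪g x, G x⟫) μ := by
    refine hGint.mono (hg.inner hG).aestronglyMeasurable ?_
    filter_upwards [hg1] with x hx
    simpa [hx] using norm_inner_le_norm (𝕜 := ℝ) (g x) (G x)
  have hge : ∫ x, ‖G x‖ ∂μ ≤ ∫ x, ⟪g x, G x⟫ ∂μ := by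
    simpa only [hinner] using hmax g' hg' hg'1
  have heq := (integral_eq_iff_of_ae_le hint hGint.norm hle).mp
    (le_antisymm (integral_mono_ae hint hGint.norm hle) hge)
  filter_upwards [hg1, heq] with x hx hxe h0
  exact eq_inv_norm_smul_of_inner_eq_norm hx h0 hxe

/-- Let `(X,μ)`, `(Y,ν)` be finite measure spaces, `f : X×Y → {-1,1}` measurable, and
suppose `(g,h)` maximizes `I_f(g,h) = ∬ f(x,y) ⟨g(x), h(y)⟩` over measurable pairs of
a.e. unit norm. With `G(x) = ∫_Y f(x,y) h(y) dν(y)`, for a.e. `x` with `G(x) ≠ 0` one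
has `g(x) = G(x)/‖G(x)‖`. -/
theorem maximizer_aligned_with_G {X Y : Type*} [MeasurableSpace X] [MeasurableSpace Y]
    (μ : Measure X) (ν : Measure Y) [IsFiniteMeasure μ] [IsFiniteMeasure ν]
    (d : ℕ) (hd : 0 < d)
    (f : X → Y → ℝ) (hf : Measurable (Function.uncurry f))
    (hfval : ∀ x y, f x y = 1 ∨ f x y = -1)
    (g : X → EuclideanSpace ℝ (Fin d)) (h : Y → EuclideanSpace ℝ (Fin d))
    (hg : Measurable g) (hh : Measurable h)
    (hg1 : ∀ᵐ x ∂μ, ‖g x‖ = 1) (hh1 : ∀ᵐ y ∂ν, ‖h y‖ = 1)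
    (hmax : ∀ (g' : X → EuclideanSpace ℝ (Fin d)) (h' : Y → EuclideanSpace ℝ (Fin d)),
      Measurable g' → Measurable h' →
      (∀ᵐ x ∂μ, ‖g' x‖ = 1) → (∀ᵐ y ∂ν, ‖h' y‖ = 1) →
      (∫ x, (∫ y, f x y * ⟪g' x, h' y⟫ ∂ν) ∂μ) ≤
        ∫ x, (∫ y, f x y * ⟪g x, h y⟫ ∂ν) ∂μ)
    (G : X → EuclideanSpace ℝ (Fin d))
    (hG : ∀ x, G x = ∫ y, f x y • h y ∂ν) :
    ∀ᵐ x ∂μ, G x ≠ 0 → g x = ‖G x‖⁻¹ • G x := by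
  have hfabs : ∀ x y, ‖f x y‖ = 1 := fun x y => by
    rcases hfval x y with h1 | h1 <;> simp [h1]
  have hnorm : ∀ x, ∀ᵐ y ∂ν, ‖f x y • h y‖ ≤ 1 := fun x => by
    filter_upwards [hh1] with y hy
    rw [norm_smul, hfabs, hy, one_mul]
  have hmeas : Measurable fun p : X × Y => f p.1 p.2 • h p.2 := hf.smul (hh.comp measurable_snd)
  have hint : ∀ x, Integrable (fun y => f x y • h y) ν := fun x =>
    Integrable.of_bound (hmeas.comp measurable_prodMk_left).aestronglyMeasurable 1 (hnorm x)
  have hGmeas : Measurable G := by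
    rw [funext hG]
    exact hmeas.stronglyMeasurable.integral_prod_right'.measurable
  have hGint : Integrable G μ := by
    refine Integrable.of_bound hGmeas.aestronglyMeasurable (1 * ν.real Set.univ) ?_
    exact .of_forall fun x => hG x ▸ norm_integral_le_of_norm_le_const (hnorm x)
  have hinner : ∀ (v : EuclideanSpace ℝ (Fin d)) (x : X),
      ∫ y, f x y * ⟪v, h y⟫ ∂ν = ⟪v, G x⟫ := fun v x => by
    rw [hG x, ← integral_inner (hint x) v]
    simp only [real_inner_smul_right]
  refine ae_eq_normalize_of_forall_integral_inner_le hg hg1 hGmeas hGint fun g' hg' hg'1 => ?_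
  simpa only [hinner] using hmax g' h hg' hh hg'1 hh1
end

section
/- Suppose the pair (g,h) maximizes I_f(g,h) over all measurable functions g : X → ℝ^d, h : Y → ℝ^d with ‖g(x)‖ = 1 and ‖h(y)‖ = 1 for almost every x, y. Define G : X → ℝ^d by G(x) = ∫_Y f(x,y) h(y) dy. Then I_f(g,h) = ∫_X ‖G(x)‖ dμ(x). -/
open MeasureTheory
open scoped RealInnerProductSpace

/-- Pulling the vector `v` out of the integral of `y ↦ a y * ⟪v, h y⟫`. -/
theorem integral_mul_inner_eq_inner_integral {Y E : Type*} [MeasurableSpace Y]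
    [NormedAddCommGroup E] [InnerProductSpace ℝ E] [CompleteSpace E] {ν : Measure Y}
    {a : Y → ℝ} {h : Y → E} (hah : Integrable (fun y => a y • h y) ν) (v : E) :
    ∫ y, a y * ⟪v, h y⟫ ∂ν = ⟪v, ∫ y, a y • h y ∂ν⟫ := by
  simp_rw [← integral_inner hah v, real_inner_smul_right]

/-- A measurable map into a nontrivial inner product space has a measurable field of
unit vectors pointing in its direction. -/
theorem exists_measurable_unit_inner_eq_norm {X E : Type*} [MeasurableSpace X]
    [NormedAddCommGroup E] [InnerProductSpace ℝ E] [Nontrivial E] [MeasurableSpace E]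
    [BorelSpace E] [SecondCountableTopology E] {G : X → E} (hG : Measurable G) :
    ∃ u : X → E, Measurable u ∧ (∀ x, ‖u x‖ = 1) ∧ ∀ x, ⟪u x, G x⟫ = ‖G x‖ := by
  classical
  obtain ⟨e, he⟩ := exists_norm_eq E zero_le_one
  refine ⟨fun x => if G x = 0 then e else ‖G x‖⁻¹ • G x, ?_, fun x => ?_, fun x => ?_⟩
  · exact Measurable.ite (hG (measurableSet_singleton 0)) measurable_const
      (hG.norm.inv.smul hG)
  · by_cases hx : G x = 0
    · simp [hx, he]
    · simp [hx, norm_smul]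
  · by_cases hx : G x = 0
    · simp [hx]
    · have : ‖G x‖ ≠ 0 := norm_ne_zero_iff.mpr hx
      simp only [hx, if_false, real_inner_smul_left, real_inner_self_eq_norm_sq]
      field_simp

/-- Let `(X,μ)`, `(Y,ν)` be finite measure spaces, `f : X×Y → {-1,1}` measurable, and
suppose `(g,h)` maximizes `I_f(g,h) = ∬ f(x,y) ⟨g(x), h(y)⟩` over measurable pairs of
a.e. unit norm. With `G(x) = ∫_Y f(x,y) h(y) dν(y)`, one has `I_f(g,h) = ∫_X ‖G(x)‖ dμ(x)`. -/
theorem maximizer_integral_eq_norm_G {X Y : Type*} [MeasurableSpace X] [MeasurableSpace Y]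
    (μ : Measure X) (ν : Measure Y) [IsFiniteMeasure μ] [IsFiniteMeasure ν]
    (d : ℕ) (hd : 0 < d)
    (f : X → Y → ℝ) (hf : Measurable (Function.uncurry f))
    (hfval : ∀ x y, f x y = 1 ∨ f x y = -1)
    (g : X → EuclideanSpace ℝ (Fin d)) (h : Y → EuclideanSpace ℝ (Fin d))
    (hg : Measurable g) (hh : Measurable h)
    (hg1 : ∀ᵐ x ∂μ, ‖g x‖ = 1) (hh1 : ∀ᵐ y ∂ν, ‖h y‖ = 1)
    (hmax : ∀ (g' : X → EuclideanSpace ℝ (Fin d)) (h' : Y → EuclideanSpace ℝ (Fin d)),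
      Measurable g' → Measurable h' →
      (∀ᵐ x ∂μ, ‖g' x‖ = 1) → (∀ᵐ y ∂ν, ‖h' y‖ = 1) →
      (∫ x, (∫ y, f x y * ⟪g' x, h' y⟫ ∂ν) ∂μ) ≤
        ∫ x, (∫ y, f x y * ⟪g x, h y⟫ ∂ν) ∂μ)
    (G : X → EuclideanSpace ℝ (Fin d))
    (hG : ∀ x, G x = ∫ y, f x y • h y ∂ν) :
    (∫ x, (∫ y, f x y * ⟪g x, h y⟫ ∂ν) ∂μ) = ∫ x, ‖G x‖ ∂μ := by
  have : Nonempty (Fin d) := ⟨⟨0, hd⟩⟩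
  have hmeas : Measurable (Function.uncurry fun x y => f x y • h y) :=
    hf.smul (hh.comp measurable_snd)
  have hnorm : ∀ x, ∀ᵐ y ∂ν, ‖f x y • h y‖ ≤ 1 := fun x => by
    filter_upwards [hh1] with y hy
    rcases hfval x y with hxy | hxy <;> simp [hxy, hy]
  have hint : ∀ x, Integrable (fun y => f x y • h y) ν := fun x =>
    Integrable.of_bound (hmeas.comp measurable_prodMk_left).aestronglyMeasurable 1 (hnorm x)
  have hI : ∀ (k : X → EuclideanSpace ℝ (Fin d)) (x : X),
      ∫ y, f x y * ⟪k x, h y⟫ ∂ν = ⟪k x, G x⟫ := fun k x => by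
    rw [hG x, integral_mul_inner_eq_inner_integral (hint x)]
  have hGmeas : Measurable G := by
    rw [funext hG]
    exact hmeas.stronglyMeasurable.integral_prod_right.measurable
  have hGint : Integrable (fun x => ‖G x‖) μ := by
    refine Integrable.of_bound hGmeas.norm.aestronglyMeasurable (1 * ν.real Set.univ)
      (.of_forall fun x => ?_)
    rw [norm_norm, hG x]
    exact norm_integral_le_of_norm_le_const (hnorm x)
  have hle : ∀ᵐ x ∂μ, ‖⟪g x, G x⟫‖ ≤ ‖G x‖ := by
    filter_upwards [hg1] with x hx
    simpa [hx] using norm_inner_le_norm (𝕜 := ℝ) (g x) (G x)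
  apply le_antisymm
  · simp_rw [hI g]
    refine integral_mono_ae (hGint.mono' (hg.inner hGmeas).aestronglyMeasurable hle) hGint ?_
    filter_upwards [hle] with x hx
    exact (le_abs_self _).trans hx
  · obtain ⟨u, hu, hu1, huG⟩ := exists_measurable_unit_inner_eq_norm hGmeas
    have hmax_u := hmax u h hu hh (.of_forall hu1) hh1
    simpa only [hI u, huG] using hmax_u
end

section
/- Let G, H : [0,1] → ℝ be Lipschitz functions such that for almost every x ∈ (0,1): G(x) ≠ 0, H(x) ≠ 0, G'(x) = −2 H(x)/|H(x)|, and H'(x) = 2 G(x)/|G(x)|. Then the function x ↦ |G(x)| + |H(x)| is constant on [0,1]. -/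
open MeasureTheory

/-- If `G, H : [0,1] → ℝ` are Lipschitz and for a.e. `x ∈ (0,1)` one has `G x ≠ 0`,
`H x ≠ 0`, `G'(x) = -2 H(x)/|H(x)|` and `H'(x) = 2 G(x)/|G(x)|`, then `|G| + |H|` is
constant on `[0,1]`. -/
theorem abs_sum_constant (G H : ℝ → ℝ) (KG KH : NNReal)
    (hG : LipschitzOnWith KG G (Set.Icc 0 1))
    (hH : LipschitzOnWith KH H (Set.Icc 0 1))
    (hde : ∀ᵐ x ∂(volume.restrict (Set.Ioo (0:ℝ) 1)),
      G x ≠ 0 ∧ H x ≠ 0 ∧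
      HasDerivAt G (-2 * (H x / |H x|)) x ∧
      HasDerivAt H (2 * (G x / |G x|)) x) :
    ∃ c : ℝ, ∀ x ∈ Set.Icc (0:ℝ) 1, |G x| + |H x| = c := by
  have hac : AbsolutelyContinuousOnInterval (fun x => |G x| + |H x|) 0 1 := by
    rw [← Set.uIcc_of_le zero_le_one] at hG hH
    exact (lipschitzWith_one_norm.comp_lipschitzOnWith hG).absolutelyContinuousOnInterval.add
      (lipschitzWith_one_norm.comp_lipschitzOnWith hH).absolutelyContinuousOnInterval
  have hderiv : ∀ᵐ x, x ∈ Set.uIcc (0:ℝ) 1 → HasDerivAt (fun x => |G x| + |H x|) 0 x := by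
    rw [Set.uIcc_of_le zero_le_one, ← ae_restrict_iff' measurableSet_Icc,
      ← restrict_Ioo_eq_restrict_Icc]
    filter_upwards [hde] with x ⟨hGx, hHx, hG', hH'⟩
    refine (((hasDerivAt_abs hGx).comp x hG').add
      ((hasDerivAt_abs hHx).comp x hH')).congr_deriv ?_
    rcases hGx.lt_or_gt with g | g <;> rcases hHx.lt_or_gt with h | h <;>
      simp [g, h, abs_of_neg, abs_of_pos, hGx, hHx]
  obtain ⟨c, hc⟩ := hac.const_of_ae_hasDerivAt_zero hderiv
  exact ⟨c, fun x hx => hc x (Set.uIcc_of_le (zero_le_one' ℝ) ▸ hx)⟩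
end

section
/- Let G, H : [0,1] → ℝ be Lipschitz functions such that for almost every x ∈ (0,1): G(x) ≠ 0, H(x) ≠ 0, G'(x) = −2 H(x)/|H(x)|, and H'(x) = 2 G(x)/|G(x)|; and suppose G(0) + G(1) = 0 and H(0) + H(1) = 0. Then there exists an odd positive integer n such that |G(0)| + |H(0)| = 1/n. -/
open MeasureTheory

open Set

/-- An absolutely continuous function on `[a, b]` whose derivative vanishes almost everywhere on
`(a, b)` takes the value `f a` throughout `[a, b]`. -/
theorem AbsolutelyContinuousOnInterval.eq_left_of_ae_hasDerivAt_zero {f : ℝ → ℝ} {a b : ℝ}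
    (hab : a ≤ b) (hf : AbsolutelyContinuousOnInterval f a b)
    (hf₀ : ∀ᵐ x ∂volume.restrict (Ioo a b), HasDerivAt f 0 x) {x : ℝ} (hx : x ∈ Icc a b) :
    f x = f a := by
  rw [restrict_Ioo_eq_restrict_Icc, ae_restrict_iff' measurableSet_Icc, ← uIcc_of_le hab] at hf₀
  obtain ⟨C, hC⟩ := hf.const_of_ae_hasDerivAt_zero hf₀
  rw [hC x (uIcc_of_le hab ▸ hx), hC a left_mem_uIcc]

theorem HasDerivAt.abs_of_ne_zero {f : ℝ → ℝ} {f' x : ℝ} (hf : HasDerivAt f f' x)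
    (hx : f x ≠ 0) : HasDerivAt (fun y => |f y|) (f x / |f x| * f') x := by
  rcases hx.lt_or_gt with h | h
  · convert! (hasDerivAt_abs_neg h).comp x hf using 1
    rw [abs_of_neg h, div_neg, div_self hx]
  · convert! (hasDerivAt_abs_pos h).comp x hf using 1
    rw [abs_of_pos h, div_self hx]

theorem Real.cos_mul_mul_div_abs_eq_sin_mul {s a b : ℝ} (hs : 0 < s) (hb : b ≠ 0)
    (hab : s * (|a| + |b|) = Real.pi / 2) :
    Real.cos (s * a) * (b / |b|) = Real.sin (s * b) := by
  have hcos : Real.cos (s * a) = Real.sin (s * |b|) := by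
    rw [← Real.cos_abs, abs_mul, abs_of_pos hs, ← Real.cos_pi_div_two_sub, ← hab]
    congr 1
    ring
  rw [hcos]
  rcases hb.lt_or_gt with h | h
  · rw [abs_of_neg h, div_neg, div_self hb, mul_neg, mul_neg, Real.sin_neg, mul_one, neg_neg]
  · rw [abs_of_pos h, div_self hb, mul_one]

/-- A solution of the rotation equation `u' = -k v`, `v' = k u` that is antisymmetric over a unit
of time and nonzero has `cos k = -1`. -/
theorem Real.cos_eq_neg_one_of_rotation_antisymmetric {u v : ℝ → ℝ} {k : ℝ}
    (hu : AbsolutelyContinuousOnInterval u 0 1) (hv : AbsolutelyContinuousOnInterval v 0 1)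
    (hde : ∀ᵐ x ∂volume.restrict (Ioo (0 : ℝ) 1),
      HasDerivAt u (-k * v x) x ∧ HasDerivAt v (k * u x) x)
    (hu1 : u 1 = -u 0) (hv1 : v 1 = -v 0) (hne : u 0 ^ 2 + v 0 ^ 2 ≠ 0) :
    Real.cos k = -1 := by
  have hcos : AbsolutelyContinuousOnInterval (fun x => Real.cos (k * x)) 0 1 :=
    ContDiffOn.absolutelyContinuousOnInterval (by fun_prop)
  have hsin : AbsolutelyContinuousOnInterval (fun x => Real.sin (k * x)) 0 1 :=
    ContDiffOn.absolutelyContinuousOnInterval (by fun_prop)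
  have hlin (x : ℝ) : HasDerivAt (fun y => k * y) k x := by
    simpa using (hasDerivAt_id x).const_mul k
  have hp := ((hu.mul hcos).add (hv.mul hsin)).eq_left_of_ae_hasDerivAt_zero zero_le_one (by
    filter_upwards [hde] with x ⟨hxu, hxv⟩
    convert! (hxu.mul (hlin x).cos).add (hxv.mul (hlin x).sin) using 1
    ring) (right_mem_Icc.2 zero_le_one)
  have hq := ((hv.mul hcos).sub (hu.mul hsin)).eq_left_of_ae_hasDerivAt_zero zero_le_one (by
    filter_upwards [hde] with x ⟨hxu, hxv⟩
    convert! (hxv.mul (hlin x).cos).sub (hxu.mul (hlin x).sin) using 1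
    ring) (right_mem_Icc.2 zero_le_one)
  simp only [Pi.add_apply, Pi.sub_apply, Pi.mul_apply, hu1, hv1, mul_one, mul_zero, Real.cos_zero,
    Real.sin_zero, add_zero, sub_zero] at hp hq
  apply mul_left_cancel₀ hne
  linear_combination -u 0 * hp - v 0 * hq

theorem Real.exists_odd_nat_of_cos_pi_div_eq_neg_one {c : ℝ} (hc : 0 < c)
    (h : Real.cos (Real.pi / c) = -1) : ∃ n : ℕ, 0 < n ∧ Odd n ∧ c = 1 / (n : ℝ) := by
  obtain ⟨m, hm⟩ := Real.cos_eq_neg_one_iff.1 h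
  have hinv : 1 / c = 2 * m + 1 := by
    apply mul_left_cancel₀ Real.pi_ne_zero
    linear_combination -hm
  have hm0 : 0 ≤ m := by
    have hpos : (0 : ℝ) < 2 * m + 1 := hinv ▸ one_div_pos.2 hc
    have : (0 : ℤ) < 2 * m + 1 := by exact_mod_cast hpos
    lia
  lift m to ℕ using hm0
  refine ⟨2 * m + 1, by lia, odd_two_mul_add_one m, ?_⟩
  push_cast at hinv ⊢
  rw [← hinv, one_div_one_div]

/-- If `G, H : [0,1] → ℝ` are Lipschitz, for a.e. `x ∈ (0,1)` one has `G x ≠ 0`,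
`H x ≠ 0`, `G'(x) = -2 H(x)/|H(x)|` and `H'(x) = 2 G(x)/|G(x)|`, and moreover
`G(0) + G(1) = 0` and `H(0) + H(1) = 0`, then `|G(0)| + |H(0)| = 1/n` for some odd
positive integer `n`. -/
theorem abs_sum_reciprocal_odd (G H : ℝ → ℝ) (KG KH : NNReal)
    (hG : LipschitzOnWith KG G (Set.Icc 0 1))
    (hH : LipschitzOnWith KH H (Set.Icc 0 1))
    (hde : ∀ᵐ x ∂(volume.restrict (Set.Ioo (0:ℝ) 1)),
      G x ≠ 0 ∧ H x ≠ 0 ∧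
      HasDerivAt G (-2 * (H x / |H x|)) x ∧
      HasDerivAt H (2 * (G x / |G x|)) x)
    (hGend : G 0 + G 1 = 0) (hHend : H 0 + H 1 = 0) :
    ∃ n : ℕ, 0 < n ∧ Odd n ∧ |G 0| + |H 0| = 1 / (n : ℝ) := by
  have hconst : ∀ x ∈ Icc (0 : ℝ) 1, |G x| + |H x| = |G 0| + |H 0| := by
    have habs {f : ℝ → ℝ} {K : NNReal} (hf : LipschitzOnWith K f (Icc 0 1)) :
        AbsolutelyContinuousOnInterval (fun x => |f x|) 0 1 := by
      rw [← uIcc_of_le zero_le_one] at hf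
      exact (lipschitzWith_one_norm.comp_lipschitzOnWith hf).absolutelyContinuousOnInterval
    intro x hx
    refine ((habs hG).add (habs hH)).eq_left_of_ae_hasDerivAt_zero zero_le_one ?_ hx
    filter_upwards [hde] with x ⟨hGx, hHx, hG', hH'⟩
    convert! (hG'.abs_of_ne_zero hGx).add (hH'.abs_of_ne_zero hHx) using 1
    ring
  have hmem : ∀ᵐ x ∂volume.restrict (Ioo (0 : ℝ) 1), x ∈ Ioo (0 : ℝ) 1 :=
    ae_restrict_mem measurableSet_Ioo
  have hc : 0 < |G 0| + |H 0| := by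
    have : (ae (volume.restrict (Ioo (0 : ℝ) 1))).NeBot := by
      rw [ae_neBot, Ne, Measure.restrict_eq_zero]
      simp
    obtain ⟨x, hx, hGx, -⟩ := (hmem.and hde).exists
    rw [← hconst x (Ioo_subset_Icc_self hx)]
    positivity
  set c := |G 0| + |H 0| with hc_def
  have hs : 0 < Real.pi / (2 * c) := by positivity
  have hsc : Real.pi / (2 * c) * c = Real.pi / 2 := by field_simp
  have hsin {f : ℝ → ℝ} {K : NNReal} (hf : LipschitzOnWith K f (Icc 0 1)) :
      AbsolutelyContinuousOnInterval (fun x => Real.sin (Real.pi / (2 * c) * f x)) 0 1 := by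
    rw [← uIcc_of_le zero_le_one] at hf
    exact (Real.lipschitzWith_sin.comp_lipschitzOnWith
      ((lipschitzWith_smul (Real.pi / (2 * c))).comp_lipschitzOnWith
        hf)).absolutelyContinuousOnInterval
  refine Real.exists_odd_nat_of_cos_pi_div_eq_neg_one hc
    (Real.cos_eq_neg_one_of_rotation_antisymmetric (hsin hG) (hsin hH) ?_ ?_ ?_ ?_)
  · filter_upwards [hde, hmem] with x ⟨hGx, hHx, hG', hH'⟩ hx
    have hcx := hconst x (Ioo_subset_Icc_self hx)
    have hk : Real.pi / c = 2 * (Real.pi / (2 * c)) := by field_simp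
    rw [← Real.cos_mul_mul_div_abs_eq_sin_mul (a := G x) hs hHx (by rw [hcx, hsc]),
      ← Real.cos_mul_mul_div_abs_eq_sin_mul (a := H x) hs hGx (by rw [add_comm, hcx, hsc]), hk]
    constructor
    · convert! (hG'.const_mul (Real.pi / (2 * c))).sin using 1
      ring
    · convert! (hH'.const_mul (Real.pi / (2 * c))).sin using 1
      ring
  · rw [← Real.sin_neg, ← mul_neg, eq_neg_of_add_eq_zero_right hGend]
  · rw [← Real.sin_neg, ← mul_neg, eq_neg_of_add_eq_zero_right hHend]
  · have hsum : Real.pi / (2 * c) * |H 0| = Real.pi / 2 - Real.pi / (2 * c) * |G 0| := by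
      rw [← hsc, hc_def]
      ring
    have hsq (y : ℝ) : Real.sin (Real.pi / (2 * c) * y) ^ 2
        = Real.sin (Real.pi / (2 * c) * |y|) ^ 2 := by
      rcases abs_choice y with h | h <;> simp [h]
    rw [hsq (G 0), hsq (H 0), hsum, Real.sin_pi_div_two_sub, Real.sin_sq_add_cos_sq]
    exact one_ne_zero
end
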